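/- For every n ≥ 5, the set X_n = {0, 1, …, n−1} with the operation x*y = 0 if x ≤ y, x*0 = x, x*y = 1 if x = y+1, and x*y = x−y−1 if x > y+1 and y ≥ 1, is a BCK-algebra, and its BCK-order coincides with the natural order of the integers 0, 1, …, n−1; in particular it is linearly ordered. -/

import Mathlib

/-- The operation of the linearly ordered BCK-algebra `X_n = {0, 1, …, n−1}`:
`x*y = 0` if `x ≤ y`, `x*0 = x`, `x*y = 1` if `x = y+1`, and `x*y = x−y−1`
if `x > y+1` and `y ≥ 1`. -/
def starOp {n : ℕ} (x y : Fin n) : Fin n :=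
  if _h : (x : ℕ) ≤ (y : ℕ) then ⟨0, Nat.lt_of_le_of_lt (Nat.zero_le _) x.isLt⟩
  else if (y : ℕ) = 0 then x
  else if (x : ℕ) = (y : ℕ) + 1 then ⟨1, by have := x.isLt; omega⟩
  else ⟨(x : ℕ) - (y : ℕ) - 1, by have := x.isLt; omega⟩

/-!
The relabelling `0 ↦ 0`, `m ↦ m + 1` for `1 ≤ m`, into the numerical semigroup
`S = {0, 2, 3, 4, …}` turns `x * y` into the residual of addition: the least `c ∈ S` with
`x ≤ c + y`. Indeed the difference of two elements `y ≤ x` of `S` lies in `S` unless it is `1`, when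
it must be rounded up to `2`. Residuation in an ordered commutative monoid with least element `0`
satisfies the BCK axioms, with the monoid order as BCK-order, and both pull back along the
relabelling.
-/

/-- BCK-algebras: the axioms (1)–(5) for an operation `op` and a constant `e`, unbundled so that
they apply to an operation on a type that already carries other structure. -/
structure IsBCK {α : Type*} (op : α → α → α) (e : α) : Prop where
  op_op_op_op : ∀ x y z, op (op (op x y) (op z y)) (op x z) = e
  op_op_op_self : ∀ x y, op (op x (op x y)) y = e
  op_const : ∀ x, op x e = x
  const_op : ∀ x, op e x = e
  antisymm : ∀ x y, op x y = e → op y x = e → x = y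

theorem IsBCK.of_injective {α β : Type*} {op : α → α → α} {e : α} {op' : β → β → β} {e' : β}
    (h : IsBCK op' e') {f : α → β} (hf : Function.Injective f)
    (map_op : ∀ x y, f (op x y) = op' (f x) (f y)) (map_const : f e = e') : IsBCK op e where
  op_op_op_op x y z := hf <| by simp only [map_op, map_const, h.op_op_op_op]
  op_op_op_self x y := hf <| by simp only [map_op, map_const, h.op_op_op_self]
  op_const x := hf <| by simp only [map_op, map_const, h.op_const]
  const_op x := hf <| by simp only [map_op, map_const, h.const_op]
  antisymm x y hxy hyx := hf <| h.antisymm (f x) (f y)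
    (by rw [← map_op, hxy, map_const]) (by rw [← map_op, hyx, map_const])

section OrderedSub

variable {M : Type*} [AddCommMonoid M] [PartialOrder M] [IsBotZeroClass M] [Sub M] [OrderedSub M]

-- Mathlib's `tsub_eq_zero_iff_le` assumes `CanonicallyOrderedAdd`, which fails in `{0, 2, 3, …}`:
-- `2 ≤ 3`, but `3` is not of the form `2 + c`.
theorem tsub_eq_zero_iff_le_of_isBotZero {a b : M} : a - b = 0 ↔ a ≤ b :=
  nonpos_iff_eq_zero.symm.trans tsub_nonpos

theorem isBCK_tsub [AddLeftMono M] : IsBCK (fun a b : M ↦ a - b) 0 where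
  op_op_op_op a b c := tsub_eq_zero_iff_le_of_isBotZero.2 <|
    tsub_le_iff_right.2 (tsub_le_tsub_add_tsub : a - b ≤ a - c + (c - b))
  op_op_op_self _ _ := tsub_eq_zero_iff_le_of_isBotZero.2 tsub_tsub_le
  op_const := tsub_zero
  const_op _ := tsub_eq_zero_iff_le_of_isBotZero.2 zero_le
  antisymm _ _ hab hba := le_antisymm (tsub_eq_zero_iff_le_of_isBotZero.1 hab)
    (tsub_eq_zero_iff_le_of_isBotZero.1 hba)

end OrderedSub

theorem val_starOp {n : ℕ} (x y : Fin n) :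
    (starOp x y : ℕ) = if (x : ℕ) ≤ y then 0 else if (y : ℕ) = 0 then (x : ℕ)
      else if (x : ℕ) = y + 1 then 1 else x - y - 1 := by
  unfold starOp
  split_ifs <;> rfl

/-- The numerical semigroup `{0, 2, 3, 4, …}` generated by `2` and `3`, in which the operation
`starOp` becomes residuation. -/
def neOneSubmonoid : AddSubmonoid ℕ where
  carrier := {m | m ≠ 1}
  zero_mem' := zero_ne_one
  add_mem' {a b} (ha : a ≠ 1) (hb : b ≠ 1) := show a + b ≠ 1 by omega

namespace neOneSubmonoid

/-- The least element of `{0, 2, 3, …}` that is at least `m`. -/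
def roundUp (m : ℕ) : neOneSubmonoid :=
  ⟨if m = 1 then 2 else m, show _ ≠ 1 by split_ifs <;> omega⟩

theorem coe_roundUp (m : ℕ) : (roundUp m : ℕ) = if m = 1 then 2 else m := rfl

theorem gc_roundUp_coe : GaloisConnection roundUp ((↑) : neOneSubmonoid → ℕ) := fun m c ↦ by
  have hc : (c : ℕ) ≠ 1 := c.2
  rw [← Subtype.coe_le_coe, coe_roundUp]
  split_ifs <;> omega

/-- Residuation: the ordinary truncated difference, rounded up into `{0, 2, 3, …}`. -/
instance : Sub neOneSubmonoid where
  sub a b := roundUp ((a : ℕ) - b)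

theorem sub_def (a b : neOneSubmonoid) : a - b = roundUp ((a : ℕ) - b) := rfl

instance : OrderedSub neOneSubmonoid where
  tsub_le_iff_right _ _ _ := (gc_roundUp_coe _ _).trans tsub_le_iff_right

instance : IsBotZeroClass neOneSubmonoid where
  isBot_zero a := Nat.zero_le a

/-- The increasing enumeration `0, 2, 3, 4, …` of the semigroup, indexed from `0`. -/
def enum : ℕ ↪o neOneSubmonoid :=
  OrderEmbedding.ofStrictMono
    (fun m ↦ ⟨if m = 0 then 0 else m + 1, show _ ≠ 1 by split_ifs <;> omega⟩)
    fun a b hab ↦ Subtype.mk_lt_mk.2 <| by split_ifs <;> omega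

theorem coe_enum (m : ℕ) : (enum m : ℕ) = if m = 0 then 0 else m + 1 := rfl

theorem enum_zero : enum 0 = 0 := rfl

theorem enum_starOp {n : ℕ} (x y : Fin n) : enum (starOp x y) = enum x - enum y := by
  apply Subtype.ext
  rw [sub_def]
  simp only [coe_roundUp, coe_enum, val_starOp]
  split_ifs <;> omega

end neOneSubmonoid

open neOneSubmonoid

theorem isBCK_starOp {n : ℕ} (hn : 0 < n) : IsBCK (starOp (n := n)) ⟨0, hn⟩ :=
  isBCK_tsub.of_injective (enum.injective.comp Fin.val_injective) enum_starOp enum_zero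

theorem starOp_eq_zero_iff {n : ℕ} (hn : 0 < n) (x y : Fin n) :
    starOp x y = ⟨0, hn⟩ ↔ (x : ℕ) ≤ y :=
  calc starOp x y = ⟨0, hn⟩
    _ ↔ enum (starOp x y) = enum 0 := by rw [enum.injective.eq_iff, Fin.ext_iff]
    _ ↔ enum x - enum y = 0 := by rw [enum_starOp, enum_zero]
    _ ↔ enum x ≤ enum y := tsub_eq_zero_iff_le_of_isBotZero
    _ ↔ (x : ℕ) ≤ y := enum.le_iff_le

theorem starOp_isBCK_linear_general (n : ℕ) (hn : 0 < n) :
    (∀ x y z : Fin n,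
      starOp (starOp (starOp x y) (starOp z y)) (starOp x z) = ⟨0, hn⟩) ∧
    (∀ x y : Fin n, starOp (starOp x (starOp x y)) y = ⟨0, hn⟩) ∧
    (∀ x : Fin n, starOp x ⟨0, hn⟩ = x) ∧
    (∀ x : Fin n, starOp ⟨0, hn⟩ x = ⟨0, hn⟩) ∧
    (∀ x y : Fin n, starOp x y = ⟨0, hn⟩ → starOp y x = ⟨0, hn⟩ → x = y) ∧
    (∀ x y : Fin n, starOp x y = ⟨0, hn⟩ ↔ (x : ℕ) ≤ (y : ℕ)) ∧
    (∀ x y : Fin n, starOp x y = ⟨0, hn⟩ ∨ starOp y x = ⟨0, hn⟩) :=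
  have h := isBCK_starOp hn
  have hle := starOp_eq_zero_iff hn
  ⟨h.op_op_op_op, h.op_op_op_self, h.op_const, h.const_op, h.antisymm, hle,
    fun x y ↦ by simpa only [hle] using le_total (x : ℕ) y⟩

/-- For every `n ≥ 5`, the set `X_n = {0, 1, …, n−1}` with the operation
`starOp` is a BCK-algebra (axioms (1)–(5)), and its BCK-order coincides with
the natural order of the integers `0, 1, …, n−1`; in particular it is
linearly ordered. -/
theorem starOp_isBCK_linear (n : ℕ) (hn : 5 ≤ n) :
    (∀ x y z : Fin n,
      starOp (starOp (starOp x y) (starOp z y)) (starOp x z) = ⟨0, by omega⟩) ∧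
    (∀ x y : Fin n, starOp (starOp x (starOp x y)) y = ⟨0, by omega⟩) ∧
    (∀ x : Fin n, starOp x ⟨0, by omega⟩ = x) ∧
    (∀ x : Fin n, starOp ⟨0, by omega⟩ x = ⟨0, by omega⟩) ∧
    (∀ x y : Fin n, starOp x y = ⟨0, by omega⟩ → starOp y x = ⟨0, by omega⟩ → x = y) ∧
    (∀ x y : Fin n, starOp x y = ⟨0, by omega⟩ ↔ (x : ℕ) ≤ (y : ℕ)) ∧
    (∀ x y : Fin n, starOp x y = ⟨0, by omega⟩ ∨ starOp y x = ⟨0, by omega⟩) :=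
  starOp_isBCK_linear_general n (by omega)
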